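/- Fix positive integers p and q with q ≥ 1, a matrix A ∈ ℝ^{q×p} each of whose columns has Euclidean norm 1, a vector y ∈ ℝ^q with |y_i| ≤ 1 for every i, a parameter λ ≥ 0, weights ρ ∈ ℝ^p with ρ_i > 0 for every i, and a constant α with 0 < α < 1/(2(q+p)). For μ ∈ ℝ^p with μ_i ≠ 0 for every i, define f_μ(x) = xᵀ(AᵀA + λI)x − 2yᵀAx + Σ_{i=1}^p (ρ_i/|μ_i|)·|x_i|, and let B = {x ∈ ℝ^p : |x_i| ≤ 1 for all i}. If j is an index with |μ_j| < α·ρ_j, and x* ∈ B is a minimizer of f_μ over B, then x*_j = 0. -/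

import Mathlib

open Matrix Real

/-!
Setting the `j`-th coordinate of `x` to zero lowers the cost by
`Q j j * x j ^ 2 + 2 * x j * g + w j * |x j|`, where `Q = AᵀA + λI`, `w i = ρ i / |μ i|` and
`2 * g` is the `j`-th partial derivative, at the modified point, of the smooth part of the cost.
Since `Q j j ≥ 0`, this is positive for `x j ≠ 0` as soon as `w j > 2 * |g|`. By Cauchy–Schwarz
the off-diagonal entries of `Q` are at most `1` in absolute value and the `j`-th entry of `Aᵀy` is
at most `‖y‖₂ ≤ q`, so `|g| ≤ (p - 1) + q`, while `|μ j| < α * ρ j` forces `w j > 2 * (q + p)`.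
-/

section WeightedL1

variable {R n : Type*} [CommRing R] [LinearOrder R] [Fintype n]

/-- The quadratic function `x ↦ xᵀQx - 2bᵀx` with the weighted `ℓ¹` penalty `∑ i, w i * |x i|`.
The cost `f_μ` is the case `Q = AᵀA + λI`, `b = Aᵀy` (written `y ᵥ* A`), `w i = ρ i / |μ i|`. -/
def l1QuadCost (Q : Matrix n n R) (b w x : n → R) : R :=
  x ⬝ᵥ Q *ᵥ x - 2 * (b ⬝ᵥ x) + ∑ i, w i * |x i|

variable [DecidableEq n]

theorem sum_mul_abs_eq_update_zero_add [IsOrderedRing R] (w x : n → R) (j : n) :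
    ∑ i, w i * |x i| = ∑ i, w i * |Function.update x j 0 i| + w j * |x j| := by
  have hrest : ∑ i ∈ {j}ᶜ, w i * |Function.update x j 0 i| = ∑ i ∈ {j}ᶜ, w i * |x i| :=
    Finset.sum_congr rfl fun i hi ↦ by
      rw [Function.update_of_ne (by simpa using hi)]
  rw [Fintype.sum_eq_add_sum_compl j, Fintype.sum_eq_add_sum_compl j, hrest,
    Function.update_self, abs_zero]
  ring

theorem l1QuadCost_eq_update_zero_add [IsOrderedRing R] {Q : Matrix n n R} (hQ : Q.IsSymm)
    (b w x : n → R) (j : n) :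
    l1QuadCost Q b w x = l1QuadCost Q b w (Function.update x j 0) +
      (Q j j * x j ^ 2 + 2 * x j * ((Q *ᵥ Function.update x j 0) j - b j) + w j * |x j|) := by
  unfold l1QuadCost
  rw [sum_mul_abs_eq_update_zero_add w x j]
  set z := Function.update x j 0
  have hx : x = z + Pi.single j (x j) := by
    ext i
    obtain rfl | hij := eq_or_ne i j <;> simp [z, *]
  have hcross : z ⬝ᵥ Q *ᵥ Pi.single j (x j) = x j * (Q *ᵥ z) j := by
    rw [dotProduct_mulVec, ← mulVec_transpose, hQ.eq, dotProduct_single, mul_comm]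
  have hdiag : Pi.single j (x j) ⬝ᵥ Q *ᵥ Pi.single j (x j) = Q j j * x j ^ 2 := by
    simp only [mulVec_single, op_smul_eq_smul, dotProduct_smul, single_dotProduct, col_apply,
      smul_eq_mul]
    ring
  have hquad : x ⬝ᵥ Q *ᵥ x = z ⬝ᵥ Q *ᵥ z + 2 * x j * (Q *ᵥ z) j + Q j j * x j ^ 2 := by
    conv_lhs => rw [hx]
    rw [mulVec_add, add_dotProduct, dotProduct_add, dotProduct_add, hcross, hdiag,
      single_dotProduct]
    ring
  have hlin : b ⬝ᵥ x = b ⬝ᵥ z + b j * x j := by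
    conv_lhs => rw [hx]
    rw [dotProduct_add, dotProduct_single]
  rw [hquad, hlin]
  ring

theorem eq_zero_of_l1QuadCost_le_update_zero [IsStrictOrderedRing R] {Q : Matrix n n R}
    (hQ : Q.IsSymm) {b w x : n → R} {j : n} (hjj : 0 ≤ Q j j)
    (hw : 2 * |(Q *ᵥ Function.update x j 0) j - b j| < w j)
    (hmin : l1QuadCost Q b w x ≤ l1QuadCost Q b w (Function.update x j 0)) :
    x j = 0 := by
  by_contra hx
  rw [l1QuadCost_eq_update_zero_add hQ] at hmin
  set g := (Q *ᵥ Function.update x j 0) j - b j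
  have hpenalty : 2 * |g| * |x j| < w j * |x j| := mul_lt_mul_of_pos_right hw (abs_pos.2 hx)
  have hgrad : -(|x j| * |g|) ≤ x j * g := abs_mul (x j) g ▸ neg_abs_le (x j * g)
  have hcurv : 0 ≤ Q j j * x j ^ 2 := mul_nonneg hjj (sq_nonneg _)
  linarith

end WeightedL1

section Bounds

variable {R m n : Type*} [CommRing R] [LinearOrder R]

theorem abs_update_zero_le_one [IsOrderedRing R] [DecidableEq n] {x : n → R}
    (hx : ∀ i, |x i| ≤ 1) (j i : n) :
    |Function.update x j 0 i| ≤ 1 := by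
  obtain rfl | hij := eq_or_ne i j
  · simp
  · simpa [hij] using hx i

theorem abs_dotProduct_update_zero_le [IsOrderedRing R] [Fintype n] [DecidableEq n]
    {u x : n → R} {j : n} (hu : ∀ k ≠ j, |u k| ≤ 1) (hx : ∀ k ≠ j, |x k| ≤ 1) :
    |u ⬝ᵥ Function.update x j 0| ≤ Fintype.card n - 1 := by
  have hterm : ∀ k ∈ ({j}ᶜ : Finset n), |u k * Function.update x j 0 k| ≤ 1 := fun k hk ↦ by
    have hkj : k ≠ j := by simpa using hk
    rw [Function.update_of_ne hkj, abs_mul]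
    exact mul_le_one₀ (hu k hkj) (abs_nonneg _) (hx k hkj)
  calc |u ⬝ᵥ Function.update x j 0|
      = |∑ k ∈ {j}ᶜ, u k * Function.update x j 0 k| := by
        rw [dotProduct, Fintype.sum_eq_add_sum_compl j]
        simp
    _ ≤ ∑ k ∈ {j}ᶜ, |u k * Function.update x j 0 k| := Finset.abs_sum_le_sum_abs _ _
    _ ≤ Finset.card {j}ᶜ • 1 := Finset.sum_le_card_nsmul _ _ _ hterm
    _ = Fintype.card n - 1 := by
        rw [Finset.card_compl, Finset.card_singleton, nsmul_one,
          Nat.cast_pred (Fintype.card_pos_iff.2 ⟨j⟩)]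

theorem abs_transpose_mul_self_apply_le_one [IsStrictOrderedRing R] [Fintype m]
    {A : Matrix m n R} (hA : ∀ k, ∑ i, A i k ^ 2 ≤ 1) (j k : n) : |(Aᵀ * A) j k| ≤ 1 := by
  refine (sq_le_one_iff_abs_le_one _).1 ?_
  calc (Aᵀ * A) j k ^ 2 ≤ (∑ i, A i j ^ 2) * ∑ i, A i k ^ 2 :=
        Finset.sum_mul_sq_le_sq_mul_sq _ _ _
    _ ≤ 1 := mul_le_one₀ (hA j) (Finset.sum_nonneg fun i _ ↦ sq_nonneg _) (hA k)

theorem lt_div_abs_of_abs_lt_mul {K : Type*} [Field K] [LinearOrder K] [IsStrictOrderedRing K]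
    {N α ρ μ : K} (hN : 0 < N) (hα : α < 1 / N) (hρ : 0 < ρ) (hμ : μ ≠ 0) (h : |μ| < α * ρ) :
    N < ρ / |μ| := by
  rw [lt_div_iff₀ (abs_pos.2 hμ), ← lt_div_iff₀' hN]
  calc |μ| < α * ρ := h
    _ < 1 / N * ρ := mul_lt_mul_of_pos_right hα hρ
    _ = ρ / N := by ring

end Bounds

theorem abs_vecMul_apply_le_sqrt {m n : Type*} [Fintype m] {A : Matrix m n ℝ} {j : n}
    (hA : ∑ i, A i j ^ 2 ≤ 1) (y : m → ℝ) : |(y ᵥ* A) j| ≤ √(∑ i, y i ^ 2) := by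
  refine Real.abs_le_sqrt ?_
  calc (y ᵥ* A) j ^ 2 ≤ (∑ i, y i ^ 2) * ∑ i, A i j ^ 2 :=
        Finset.sum_mul_sq_le_sq_mul_sq _ _ _
    _ ≤ ∑ i, y i ^ 2 := mul_le_of_le_one_right (Finset.sum_nonneg fun i _ ↦ sq_nonneg _) hA

theorem sqrt_sum_sq_le_card {m : Type*} [Fintype m] {y : m → ℝ} (hy : ∀ i, |y i| ≤ 1) :
    √(∑ i, y i ^ 2) ≤ Fintype.card m := by
  refine Real.sqrt_le_iff.2 ⟨Nat.cast_nonneg _, ?_⟩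
  calc ∑ i, y i ^ 2 ≤ Fintype.card m • (1 : ℝ) :=
        Finset.sum_le_card_nsmul _ _ _ fun i _ ↦ (sq_le_one_iff_abs_le_one _).2 (hy i)
    _ = Fintype.card m := nsmul_one _
    _ ≤ (Fintype.card m : ℝ) ^ 2 := mod_cast Nat.le_self_pow two_ne_zero _

theorem stmt_4_general {m n : Type*} [Fintype m] [Fintype n] [DecidableEq n] {A : Matrix m n ℝ}
    (hA : ∀ k, ∑ i, A i k ^ 2 ≤ 1) {y : m → ℝ} {lam : ℝ} {w x : n → ℝ} {j : n}
    (hlam : 0 ≤ ∑ i, A i j ^ 2 + lam) (hx : ∀ k ≠ j, |x k| ≤ 1)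
    (hw : 2 * (√(∑ i, y i ^ 2) + (Fintype.card n - 1)) < w j)
    (hmin : l1QuadCost (Aᵀ * A + lam • (1 : Matrix n n ℝ)) (y ᵥ* A) w x ≤
      l1QuadCost (Aᵀ * A + lam • (1 : Matrix n n ℝ)) (y ᵥ* A) w (Function.update x j 0)) :
    x j = 0 := by
  set Q := Aᵀ * A + lam • (1 : Matrix n n ℝ) with hQ
  have hsymm : Q.IsSymm := .add (transpose_mul Aᵀ A) (isSymm_one.smul lam)
  have hdiag : Q j j = ∑ i, A i j ^ 2 + lam := by simp [hQ, mul_apply, sq]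
  have hoff : ∀ k ≠ j, |Q j k| ≤ 1 := fun k hk ↦ by
    simpa [hQ, one_apply_ne' hk] using abs_transpose_mul_self_apply_le_one hA j k
  have hQx : |(Q *ᵥ Function.update x j 0) j| ≤ Fintype.card n - 1 :=
    abs_dotProduct_update_zero_le hoff hx
  have hyA : |(y ᵥ* A) j| ≤ √(∑ i, y i ^ 2) := abs_vecMul_apply_le_sqrt (hA j) y
  refine eq_zero_of_l1QuadCost_le_update_zero hsymm (hdiag ▸ hlam) ?_ hmin
  linarith [abs_sub ((Q *ᵥ Function.update x j 0) j) ((y ᵥ* A) j)]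

/-- Lemma 1: in one ICR iteration, if the running-average weight satisfies
`|μⱼ| < α·ρⱼ` with `α < 1/(2(q+p))`, then the `j`-th coordinate of any
minimizer of `f_μ` over the unit box vanishes. -/
theorem stmt_4 (p q : ℕ) (hp : 0 < p) (hq : 1 ≤ q)
    (A : Matrix (Fin q) (Fin p) ℝ)
    (hA : ∀ j, Real.sqrt (∑ i, (A i j) ^ 2) = 1)
    (y : Fin q → ℝ) (hy : ∀ i, |y i| ≤ 1)
    (lam : ℝ) (hlam : 0 ≤ lam)
    (ρ : Fin p → ℝ) (hρ : ∀ i, 0 < ρ i)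
    (α : ℝ) (hα : 0 < α) (hα' : α < 1 / (2 * ((q : ℝ) + p)))
    (f : (Fin p → ℝ) → (Fin p → ℝ) → ℝ)
    (hf : ∀ (μ x : Fin p → ℝ), f μ x =
      x ⬝ᵥ (Aᵀ * A + lam • (1 : Matrix (Fin p) (Fin p) ℝ)).mulVec x
        - 2 * (y ⬝ᵥ A.mulVec x)
        + ∑ i, (ρ i / |μ i|) * |x i|)
    (B : Set (Fin p → ℝ)) (hB : B = {x | ∀ i, |x i| ≤ 1})
    (μ : Fin p → ℝ) (hμ : ∀ i, μ i ≠ 0)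
    (j : Fin p) (hμj : |μ j| < α * ρ j)
    (xstar : Fin p → ℝ) (hxstarB : xstar ∈ B)
    (hmin : ∀ z ∈ B, f μ xstar ≤ f μ z) :
    xstar j = 0 := by
  have hw := lt_div_abs_of_abs_lt_mul (by positivity) hα' (hρ j) (hμ j) hμj
  subst hB
  refine stmt_4_general (lam := lam) (y := y) (w := fun i ↦ ρ i / |μ i|)
    (fun k ↦ (Real.sqrt_eq_one.1 (hA k)).le) (by positivity) (fun k _ ↦ hxstarB k) ?_ ?_
  · have hy_norm := sqrt_sum_sq_le_card hy
    simp only [Fintype.card_fin] at hy_norm ⊢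
    linarith
  · simpa only [hf, l1QuadCost, dotProduct_mulVec y] using
      hmin _ (abs_update_zero_le_one hxstarB j)
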